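/- arXiv:2011.01199 — 2 statements merged into one kernel-verified Lean document; each statement's English description precedes it below -/
import Mathlib

section
/- Let β ∈ [3/4, 1) and x > 0. Then lim_{d→∞} (1/(d ln d)) Σ_{j=3}^{⌊dx⌋} Σ_{k=1}^{j−2} (k/j)^{2β−3/2} a_{3/2}(j−k)² = 9x/64. -/
open Filter

/-- For `m ∈ ℤ`, `a_{3/2}(m) = (1/2)(|m+1|^{3/2} + |m−1|^{3/2} − 2|m|^{3/2})`. -/
noncomputable def aFun (α : ℝ) (m : ℤ) : ℝ :=
  (|(m : ℝ) + 1| ^ α + |(m : ℝ) - 1| ^ α - 2 * |(m : ℝ)| ^ α) / 2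

lemma rpow_three_half (y : ℝ) (hy : 0 ≤ y) : y ^ (3 / 2 : ℝ) = √y ^ 3 := by
  rw [Real.sqrt_eq_rpow, ← Real.rpow_natCast, ← Real.rpow_mul hy]; norm_num

noncomputable def FF (h : ℝ) : ℝ :=
  2 * (2 + 2 * (√(1 + h) * √(1 - h)) - (√(1 + h) * √(1 - h)) ^ 2) /
    ((1 + √(1 + h) * √(1 - h)) * (√(1 + h) ^ 3 + √(1 - h) ^ 3 + 2))

lemma FF_key (h : ℝ) (h0 : 0 ≤ h) (h1 : h ≤ 1) :
    √(1 + h) ^ 3 + √(1 - h) ^ 3 - 2 = h ^ 2 * FF h := by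
  unfold FF
  have hs : √(1 + h) ^ 2 = 1 + h := Real.sq_sqrt (by linarith)
  have ht : √(1 - h) ^ 2 = 1 - h := Real.sq_sqrt (by linarith)
  have hs0 : 0 ≤ √(1 + h) := Real.sqrt_nonneg _
  have ht0 : 0 ≤ √(1 - h) := Real.sqrt_nonneg _
  generalize √(1 + h) = s at *
  generalize √(1 - h) = t at *
  have hd : (1 + s * t) * (s ^ 3 + t ^ 3 + 2) ≠ 0 := by positivity
  have hq : (s * t) ^ 2 = 1 - h ^ 2 := by rw [mul_pow, hs, ht]; ring
  have e1 : (s ^ 3 + t ^ 3) ^ 2 = 2 + 6 * h ^ 2 + 2 * (s * t) ^ 3 := by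
    have : (s ^ 3 + t ^ 3) ^ 2 = (s ^ 2) ^ 3 + (t ^ 2) ^ 3 + 2 * (s * t) ^ 3 := by ring
    rw [this, hs, ht]; ring
  rw [← mul_div_assoc, eq_div_iff hd]
  generalize s * t = q at *
  have : (s ^ 3 + t ^ 3 - 2) * ((1 + q) * (s ^ 3 + t ^ 3 + 2))
      = ((s ^ 3 + t ^ 3) ^ 2 - 4) * (1 + q) := by ring
  rw [this, e1]
  have hh : h ^ 2 = 1 - q ^ 2 := by linarith
  rw [hh]; ring

noncomputable def bb (m : ℕ) : ℝ := aFun (3 / 2) (m : ℤ) ^ 2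

lemma bb_eq (m : ℕ) (hm : 1 ≤ m) : (m : ℝ) * bb m = FF (1 / m) ^ 2 / 4 := by
  have hM : (1 : ℝ) ≤ m := by exact_mod_cast hm
  have hM0 : (m : ℝ) ≠ 0 := by positivity
  have key := FF_key (1 / m) (by positivity) (by rw [div_le_one (by positivity)]; exact hM)
  have e1 : √((m : ℝ) + 1) = √m * √(1 + 1 / m) := by
    rw [← Real.sqrt_mul (by positivity)]; congr 1; field_simp
  have e2 : √((m : ℝ) - 1) = √m * √(1 - 1 / m) := by
    rw [← Real.sqrt_mul (by positivity)]; congr 1; field_simp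
  unfold bb aFun
  push_cast
  rw [abs_of_nonneg (by positivity : (0 : ℝ) ≤ (m : ℝ) + 1),
    abs_of_nonneg (by linarith : (0 : ℝ) ≤ (m : ℝ) - 1),
    abs_of_nonneg (by positivity : (0 : ℝ) ≤ (m : ℝ)),
    rpow_three_half _ (by positivity), rpow_three_half _ (by linarith),
    rpow_three_half _ (by positivity), e1, e2]
  have e3 : (√(m : ℝ) * √(1 + 1 / m)) ^ 3 + (√(m : ℝ) * √(1 - 1 / m)) ^ 3 - 2 * √(m : ℝ) ^ 3
      = √(m : ℝ) ^ 3 * ((1 / m) ^ 2 * FF (1 / m)) := by rw [← key]; ring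
  rw [e3]
  have e4 : (√(m : ℝ) ^ 3) ^ 2 = (m : ℝ) ^ 3 := by
    rw [← pow_mul, mul_comm, pow_mul, Real.sq_sqrt (by positivity)]
  rw [div_pow, mul_pow, e4]
  field_simp
  norm_num

lemma bb_tendsto : Tendsto (fun m : ℕ => (m : ℝ) * bb m) atTop (nhds (9 / 64)) := by
  have hc : ContinuousAt (fun h => FF h ^ 2 / 4) 0 := by
    unfold FF
    apply ContinuousAt.div_const
    apply ContinuousAt.pow
    apply ContinuousAt.div (by fun_prop) (by fun_prop)
    norm_num
  have h0 : FF 0 ^ 2 / 4 = 9 / 64 := by unfold FF; norm_num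
  have := hc.tendsto.comp (tendsto_one_div_atTop_nhds_zero_nat (𝕜 := ℝ))
  simp only [h0] at this
  refine this.congr' ?_
  filter_upwards [eventually_ge_atTop 1] with m hm
  rw [bb_eq m hm]; rfl

lemma cesaro (u v : ℕ → ℝ) (c : ℝ) (hv : ∀ n, 0 ≤ v n) (hv' : ∀ᶠ n in atTop, v n ≠ 0)
    (h : Tendsto (fun n => u n / v n) atTop (nhds c))
    (hs : Tendsto (fun n => ∑ i ∈ Finset.range n, v i) atTop atTop) :
    Tendsto (fun n => (∑ i ∈ Finset.range n, u i) / ∑ i ∈ Finset.range n, v i)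
      atTop (nhds c) := by
  have h1 : (fun n => u n - c * v n) =o[atTop] v := by
    rw [Asymptotics.isLittleO_iff_tendsto' (by filter_upwards [hv'] with n hn h; exact absurd h hn)]
    have := h.sub_const c
    rw [sub_self] at this
    refine this.congr' ?_
    filter_upwards [hv'] with n hn
    field_simp
  have h2 := (h1.sum_range hv hs).tendsto_div_nhds_zero
  have h3 := h2.add_const c
  rw [zero_add] at h3
  refine h3.congr' ?_
  filter_upwards [hs.eventually_ne_atTop 0] with n hn
  rw [Finset.sum_sub_distrib, ← Finset.mul_sum]
  field_simp
  ring

lemma harm (n : ℕ) : ∑ i ∈ Finset.range n, (1 : ℝ) / ((i : ℝ) + 1) = (harmonic n : ℝ) := by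
  unfold harmonic; push_cast; simp

lemma log_tt : Tendsto (fun n : ℕ => Real.log n) atTop atTop :=
  Real.tendsto_log_atTop.comp tendsto_natCast_atTop_atTop

lemma harm_tt : Tendsto (fun n => ∑ i ∈ Finset.range n, (1 : ℝ) / ((i : ℝ) + 1)) atTop atTop := by
  simp only [harm]
  refine tendsto_atTop_mono' _ ?_ log_tt
  filter_upwards [eventually_ge_atTop 1] with n hn
  refine le_trans ?_ (log_add_one_le_harmonic n)
  apply Real.log_le_log (by positivity); push_cast; linarith

lemma harm_log : Tendsto (fun n : ℕ => (harmonic n : ℝ) / Real.log n) atTop (nhds 1) := by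
  have h := Real.tendsto_harmonic_sub_log.div_atTop log_tt
  have h3 := h.add_const 1
  rw [zero_add] at h3
  refine h3.congr' ?_
  filter_upwards [log_tt.eventually_ne_atTop 0] with n hn
  field_simp
  ring

lemma B_tendsto : Tendsto (fun n : ℕ => (∑ i ∈ Finset.range n, bb (i + 1)) / Real.log n)
    atTop (nhds (9 / 64)) := by
  have h := cesaro (fun i => bb (i + 1)) (fun i => (1 : ℝ) / ((i : ℝ) + 1)) (9 / 64)
    (fun n => by positivity) (Eventually.of_forall fun n => by positivity)
    (by
      refine ((tendsto_add_atTop_iff_nat 1).2 bb_tendsto).congr fun n => ?_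
      push_cast; field_simp) harm_tt
  have h2 := h.mul harm_log
  rw [mul_one] at h2
  refine h2.congr' ?_
  filter_upwards [harm_tt.eventually_ne_atTop 0] with n hn
  rw [harm] at hn ⊢
  field_simp

noncomputable def SS (p : ℝ) (j : ℕ) : ℝ := ∑ k ∈ Finset.Icc 1 (j - 2),
            ((k : ℝ) / (j : ℝ)) ^ p * aFun (3 / 2) ((j : ℤ) - k) ^ 2

lemma A_eq (n : ℕ) : ∑ k ∈ Finset.Icc 1 n, bb (n + 2 - k) + bb 1
    = ∑ i ∈ Finset.range (n + 1), bb (i + 1) := by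
  rw [Finset.sum_range_succ', zero_add]
  congr 1
  refine Finset.sum_bij' (fun k _ => n - k) (fun i _ => n - i) ?_ ?_ ?_ ?_ ?_
  · intro k hk; simp at hk ⊢; omega
  · intro k hk; simp at hk ⊢; omega
  · intro k hk; simp at hk ⊢; omega
  · intro k hk; simp at hk ⊢; omega
  · intro k hk; simp at hk ⊢; congr 1; omega

lemma bb_nonneg (m : ℕ) : 0 ≤ bb m := sq_nonneg _

lemma SS_bounds (p : ℝ) (hp0 : 0 ≤ p) (hp1 : p ≤ 1) : ∃ C : ℝ, ∀ n : ℕ,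
    SS p (n + 2) ≤ ∑ i ∈ Finset.range (n + 1), bb (i + 1) ∧
    ∑ i ∈ Finset.range (n + 1), bb (i + 1) - C ≤ SS p (n + 2) := by
  obtain ⟨C, hC⟩ := bb_tendsto.bddAbove_range
  have hC' : ∀ m : ℕ, (m : ℝ) * bb m ≤ C := fun m => hC ⟨m, rfl⟩
  have hC0 : 0 ≤ C := by simpa using hC' 0
  refine ⟨C + bb 1, fun n => ?_⟩
  have hS : SS p (n + 2) = ∑ k ∈ Finset.Icc 1 n,
      ((k : ℝ) / ((n + 2 : ℕ) : ℝ)) ^ p * bb (n + 2 - k) := by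
    unfold SS
    refine Finset.sum_congr (by simp) fun k hk => ?_
    simp at hk
    unfold bb
    rw [Nat.cast_sub (by omega)]
  rw [hS, ← A_eq]
  constructor
  · refine le_trans (Finset.sum_le_sum (g := fun k => bb (n + 2 - k)) fun k hk => ?_)
      (le_add_of_nonneg_right (bb_nonneg 1))
    simp at hk
    refine mul_le_of_le_one_left (bb_nonneg _) (Real.rpow_le_one (by positivity) ?_ hp0)
    rw [div_le_one (by positivity)]
    exact_mod_cast (by omega : k ≤ n + 2)
  · have : ∑ k ∈ Finset.Icc 1 n, (bb (n + 2 - k) - C / ((n + 2 : ℕ) : ℝ)) ≤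
        ∑ k ∈ Finset.Icc 1 n, ((k : ℝ) / ((n + 2 : ℕ) : ℝ)) ^ p * bb (n + 2 - k) := by
      refine Finset.sum_le_sum fun k hk => ?_
      simp only [Finset.mem_Icc] at hk
      have h1 : (k : ℝ) / ((n + 2 : ℕ) : ℝ) ≤ ((k : ℝ) / ((n + 2 : ℕ) : ℝ)) ^ p := by
        have hk0 : (0 : ℝ) < k := by exact_mod_cast hk.1
        have := Real.rpow_le_rpow_of_exponent_ge (x := (k : ℝ) / ((n + 2 : ℕ) : ℝ))
          (by positivity)
          (by rw [div_le_one (by positivity)]; exact_mod_cast (by omega : k ≤ n + 2)) hp1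
        rwa [Real.rpow_one] at this
      refine le_trans ?_ (mul_le_mul_of_nonneg_right h1 (bb_nonneg _))
      have h2 := hC' (n + 2 - k)
      rw [Nat.cast_sub (by omega)] at h2
      have hN : (0 : ℝ) < ((n + 2 : ℕ) : ℝ) := by positivity
      generalize bb (n + 2 - k) = b at *
      generalize ((n + 2 : ℕ) : ℝ) = N at *
      rw [div_mul_eq_mul_div, sub_le_iff_le_add, ← add_div, le_div_iff₀ hN]
      linarith
    rw [Finset.sum_sub_distrib] at this
    simp only [Finset.sum_const, Nat.card_Icc, nsmul_eq_mul] at this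
    have h3 : ((n + 1 - 1 : ℕ) : ℝ) * (C / ((n + 2 : ℕ) : ℝ)) ≤ C := by
      rw [← mul_div_assoc, div_le_iff₀ (by positivity)]
      push_cast
      nlinarith
    linarith

lemma log_ratio : Tendsto (fun n : ℕ => Real.log ((n + 1 : ℕ) : ℝ) / Real.log ((n + 2 : ℕ) : ℝ))
    atTop (nhds 1) := by
  have h1 : Tendsto (fun n : ℕ => Real.log ((n + 2 : ℕ) : ℝ)) atTop atTop :=
    log_tt.comp (tendsto_add_atTop_nat 2)
  have h0 : Tendsto (fun n : ℕ => 1 - Real.log 2 / Real.log ((n + 2 : ℕ) : ℝ)) atTop (nhds 1) := by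
    have := (tendsto_const_nhds (x := Real.log 2)).div_atTop h1
    simpa using this.const_sub 1
  have hpos : ∀ n : ℕ, 0 < Real.log ((n + 2 : ℕ) : ℝ) := fun n =>
    Real.log_pos (by push_cast; linarith [(Nat.cast_nonneg n : (0 : ℝ) ≤ n)])
  refine tendsto_of_tendsto_of_tendsto_of_le_of_le h0 tendsto_const_nhds (fun n => ?_) (fun n => ?_)
  · have := hpos n
    simp only
    rw [one_sub_div this.ne', div_le_div_iff_of_pos_right this, sub_le_iff_le_add,
      ← Real.log_mul (by positivity) (by norm_num)]
    apply Real.log_le_log (by positivity)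
    push_cast; linarith [(Nat.cast_nonneg n : (0 : ℝ) ≤ n)]
  · simp only
    rw [div_le_one (hpos n)]
    apply Real.log_le_log (by positivity)
    push_cast; linarith

lemma SS_tendsto (p : ℝ) (hp0 : 0 ≤ p) (hp1 : p ≤ 1) :
    Tendsto (fun j : ℕ => SS p j / Real.log j) atTop (nhds (9 / 64)) := by
  obtain ⟨C, hC⟩ := SS_bounds p hp0 hp1
  rw [← tendsto_add_atTop_iff_nat 2]
  have h1 : Tendsto (fun n : ℕ => Real.log ((n + 2 : ℕ) : ℝ)) atTop atTop :=
    log_tt.comp (tendsto_add_atTop_nat 2)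
  have hpos : ∀ n : ℕ, 0 < Real.log ((n + 2 : ℕ) : ℝ) := fun n =>
    Real.log_pos (by push_cast; linarith [(Nat.cast_nonneg n : (0 : ℝ) ≤ n)])
  have hB : Tendsto (fun n : ℕ => (∑ i ∈ Finset.range (n + 1), bb (i + 1)) /
      Real.log ((n + 2 : ℕ) : ℝ)) atTop (nhds (9 / 64)) := by
    have := (((tendsto_add_atTop_iff_nat 1).2 B_tendsto).mul log_ratio)
    rw [mul_one] at this
    refine this.congr' ?_
    filter_upwards [eventually_ge_atTop 1] with n hn
    have : 0 < Real.log ((n + 1 : ℕ) : ℝ) := Real.log_pos (by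
      have : (1 : ℝ) ≤ n := by exact_mod_cast hn
      push_cast; linarith)
    have := hpos n
    field_simp
  have hB2 : Tendsto (fun n : ℕ => ((∑ i ∈ Finset.range (n + 1), bb (i + 1)) - C) /
      Real.log ((n + 2 : ℕ) : ℝ)) atTop (nhds (9 / 64)) := by
    have := hB.sub ((tendsto_const_nhds (x := C)).div_atTop h1)
    rw [sub_zero] at this
    exact this.congr fun n => by rw [sub_div]
  exact tendsto_of_tendsto_of_tendsto_of_le_of_le hB2 hB
    (fun n => div_le_div_of_nonneg_right (hC n).2 (hpos n).le)
    (fun n => div_le_div_of_nonneg_right (hC n).1 (hpos n).le)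

lemma sum_log (n : ℕ) : ∑ i ∈ Finset.range (n + 1), Real.log i = Real.log (n.factorial) := by
  induction n with
  | zero => simp
  | succ n ih =>
    rw [Finset.sum_range_succ, ih, Nat.factorial_succ, Nat.cast_mul,
      Real.log_mul (by positivity) (by positivity), add_comm]

lemma logfac : Tendsto (fun n : ℕ => Real.log (n.factorial) / (n * Real.log n)) atTop (nhds 1) := by
  have h0 : Tendsto (fun n : ℕ => 1 - 1 / Real.log (n : ℝ)) atTop (nhds 1) := by
    have := (tendsto_const_nhds (x := (1 : ℝ))).div_atTop log_tt
    simpa using this.const_sub 1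
  refine tendsto_of_tendsto_of_tendsto_of_le_of_le' h0 tendsto_const_nhds ?_ ?_
  · filter_upwards [eventually_ge_atTop 2] with n hn
    have hn1 : (2 : ℝ) ≤ n := by exact_mod_cast hn
    have hl : 0 < Real.log n := Real.log_pos (by linarith)
    have h2 : (n : ℝ) ^ n / n.factorial ≤ Real.exp n :=
      Real.pow_div_factorial_le_exp n (by positivity) n
    have h3 := Real.log_le_log (by positivity) h2
    rw [Real.log_exp, Real.log_div (by positivity) (by positivity), Real.log_pow] at h3
    rw [le_div_iff₀ (by positivity)]
    have : (1 - 1 / Real.log (n : ℝ)) * (n * Real.log n) = n * Real.log n - n := by field_simp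
    linarith
  · filter_upwards [eventually_ge_atTop 2] with n hn
    have hn1 : (2 : ℝ) ≤ n := by exact_mod_cast hn
    have hl : 0 < Real.log n := Real.log_pos (by linarith)
    rw [div_le_one (by positivity), ← Real.log_pow]
    apply Real.log_le_log (by positivity)
    exact_mod_cast Nat.factorial_le_pow n

lemma sumlog_tt : Tendsto (fun n : ℕ => ∑ i ∈ Finset.range n, Real.log i) atTop atTop := by
  rw [← tendsto_add_atTop_iff_nat 1]
  simp only [sum_log]
  exact log_tt.comp (tendsto_atTop_mono Nat.self_le_factorial tendsto_id)

lemma T_tendsto (p : ℝ) (hp0 : 0 ≤ p) (hp1 : p ≤ 1) :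
    Tendsto (fun n : ℕ => (∑ j ∈ Finset.range (n + 1), SS p j) / (n * Real.log n))
      atTop (nhds (9 / 64)) := by
  have h := cesaro (SS p) (fun j => Real.log j) (9 / 64) (fun n => Real.log_natCast_nonneg n)
    (log_tt.eventually_ne_atTop 0) (SS_tendsto p hp0 hp1) sumlog_tt
  have h2 := ((tendsto_add_atTop_iff_nat 1).2 h).mul logfac
  rw [mul_one] at h2
  refine h2.congr' ?_
  filter_upwards [((tendsto_add_atTop_iff_nat 1).2 sumlog_tt).eventually_ne_atTop 0] with n hn
  rw [sum_log] at hn ⊢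
  rw [div_mul_div_cancel₀ hn]

lemma T_eq (p : ℝ) (n : ℕ) :
    ∑ j ∈ Finset.Icc 3 n, SS p j = ∑ j ∈ Finset.range (n + 1), SS p j := by
  apply Finset.sum_subset
  · intro j hj; simp at hj ⊢; omega
  · intro j hj hj'
    simp at hj hj'
    have : j - 2 = 0 := by omega
    simp [SS, this]

/-- for `β ∈ [3/4, 1)` and `x > 0`,
`lim_{d→∞} (1/(d ln d)) Σ_{j=3}^{⌊dx⌋} Σ_{k=1}^{j−2} (k/j)^{2β−3/2} a_{3/2}(j−k)² = 9x/64`. -/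
theorem double_sum_log_limit (β x : ℝ) (hβ1 : 3 / 4 ≤ β) (hβ2 : β < 1) (hx : 0 < x) :
    Tendsto (fun d : ℕ =>
        (1 / ((d : ℝ) * Real.log d)) *
          ∑ j ∈ Finset.Icc 3 ⌊(d : ℝ) * x⌋₊, ∑ k ∈ Finset.Icc 1 (j - 2),
            ((k : ℝ) / (j : ℝ)) ^ (2 * β - 3 / 2) * aFun (3 / 2) ((j : ℤ) - k) ^ 2)
      atTop (nhds (9 * x / 64)) := by
  have hN : Tendsto (fun d : ℕ => ⌊(d : ℝ) * x⌋₊) atTop atTop :=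
    tendsto_nat_floor_atTop.comp (tendsto_natCast_atTop_atTop.atTop_mul_const hx)
  have hr : Tendsto (fun d : ℕ => (⌊(d : ℝ) * x⌋₊ : ℝ) / d) atTop (nhds x) := by
    have := (tendsto_nat_floor_mul_div_atTop (R := ℝ) hx.le).comp
      (tendsto_natCast_atTop_atTop (R := ℝ))
    refine this.congr fun d => ?_
    simp [mul_comm]
  have hl : Tendsto (fun d : ℕ => Real.log (⌊(d : ℝ) * x⌋₊ : ℝ) / Real.log d) atTop (nhds 1) := by
    have h := ((Real.continuousAt_log hx.ne').tendsto.comp hr).div_atTop log_tt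
    have h3 := h.add_const 1
    rw [zero_add] at h3
    refine h3.congr' ?_
    filter_upwards [log_tt.eventually_ne_atTop 0, eventually_ge_atTop 1,
      hN.eventually_ge_atTop 1] with d hd hd1 hd2
    have a1 : (d : ℝ) ≠ 0 := by positivity
    have a2 : (⌊(d : ℝ) * x⌋₊ : ℝ) ≠ 0 := by positivity
    simp only [Function.comp]
    rw [Real.log_div a2 a1]
    field_simp
    ring
  have hT := (T_tendsto (2 * β - 3 / 2) (by linarith) (by linarith)).comp hN
  have h := (hT.mul hr).mul hl
  have e : 9 / 64 * x * 1 = 9 * x / 64 := by ring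
  rw [e] at h
  refine h.congr' ?_
  filter_upwards [log_tt.eventually_ne_atTop 0, eventually_ge_atTop 1,
      hN.eventually_ge_atTop 1, (log_tt.comp hN).eventually_ne_atTop 0] with d hd hd1 hd2 hd3
  have a1 : (d : ℝ) ≠ 0 := by positivity
  have a2 : (⌊(d : ℝ) * x⌋₊ : ℝ) ≠ 0 := by positivity
  have := T_eq (2 * β - 3 / 2) ⌊(d : ℝ) * x⌋₊
  simp only [Function.comp] at hd3 ⊢
  rw [← this]
  unfold SS
  field_simp
end

section
/- Let 0 < α < 2. Then there exists a constant C > 0 such that for all integers d ≥ 2: d^{−1} (Σ_{m=−d+1}^{d−1} |a_α(m)|^{4/3})³ ≤ C d^{−1} if 0 < α < 5/4; d^{−1} (Σ_{m=−d+1}^{d−1} |a_α(m)|^{4/3})³ ≤ C d^{−1} (ln d)³ if α = 5/4; and d^{−1} (Σ_{m=−d+1}^{d−1} |a_α(m)|^{4/3})³ ≤ C d^{4α−6} if 5/4 < α < 2. -/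
theorem hh_second_diff (α : ℝ) (hα0 : 0 < α) (hα2 : α < 2) (x : ℝ) (hx : 2 ≤ x) :
    |(x + 1) ^ α + (x - 1) ^ α - 2 * x ^ α| ≤ 8 * x ^ (α - 2) := by
  have h1 : ∃ c ∈ Set.Ioo (x - 1) x,
      α * (c + 1) ^ (α - 1) - α * c ^ (α - 1) =
        (((x + 1) ^ α - x ^ α) - ((x - 1 + 1) ^ α - (x - 1) ^ α)) / (x - (x - 1)) := by
    have hd : ∀ y : ℝ, 0 < y → HasDerivAt (fun y : ℝ => (y + 1) ^ α - y ^ α)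
        (α * (y + 1) ^ (α - 1) - α * y ^ (α - 1)) y := by
      intro y hy
      have e1 := ((hasDerivAt_id y).add_const (1 : ℝ)).rpow_const (p := α)
        (Or.inl (by simp only [id]; linarith))
      have e2 := Real.hasDerivAt_rpow_const (x := y) (p := α) (Or.inl hy.ne')
      have e3 := e1.sub e2
      simp only [id, one_mul] at e3
      exact e3
    refine exists_hasDerivAt_eq_slope (fun y : ℝ => (y + 1) ^ α - y ^ α) _ (by linarith) ?_ ?_
    · intro y hy
      exact (hd y (by linarith [hy.1])).continuousAt.continuousWithinAt
    · intro y hy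
      exact hd y (by linarith [hy.1])
  obtain ⟨c, hc, hce⟩ := h1
  have hc0 : 0 < c := by linarith [hc.1]
  have h2 : ∃ e ∈ Set.Ioo c (c + 1),
      (α - 1) * e ^ (α - 1 - 1) = ((c + 1) ^ (α - 1) - c ^ (α - 1)) / (c + 1 - c) := by
    refine exists_hasDerivAt_eq_slope (fun y : ℝ => y ^ (α - 1)) _ (by linarith) ?_ ?_
    · intro y hy
      exact (Real.hasDerivAt_rpow_const (x := y) (p := α - 1)
        (Or.inl (by linarith [hy.1]))).continuousAt.continuousWithinAt
    · intro y hy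
      exact Real.hasDerivAt_rpow_const (Or.inl (by linarith [hy.1]))
  obtain ⟨e, he, hee⟩ := h2
  have he0 : x / 2 ≤ e := by linarith [hc.1, he.1]
  have key : (x + 1) ^ α + (x - 1) ^ α - 2 * x ^ α = α * (α - 1) * e ^ (α - 2) := by
    rw [show c + 1 - c = 1 by ring, div_one, show α - 1 - 1 = α - 2 by ring] at hee
    rw [show x - (x - 1) = 1 by ring, div_one, show x - 1 + 1 = x by ring] at hce
    have : α * (α - 1) * e ^ (α - 2) = α * ((α - 1) * e ^ (α - 2)) := by ring
    rw [this, hee]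
    linarith
  have hepos : 0 < e := by linarith
  have b1 : e ^ (α - 2) ≤ (x / 2) ^ (α - 2) :=
    Real.rpow_le_rpow_of_nonpos (by linarith) he0 (by linarith)
  have b2 : (x / 2) ^ (α - 2) ≤ 4 * x ^ (α - 2) := by
    rw [Real.div_rpow (by linarith) (by norm_num), div_eq_mul_inv, ← Real.rpow_neg (by norm_num),
      mul_comm]
    have : (2 : ℝ) ^ (-(α - 2)) ≤ 2 ^ (2 : ℝ) :=
      Real.rpow_le_rpow_of_exponent_le (by norm_num) (by linarith)
    have h4 : (2 : ℝ) ^ (2 : ℝ) = 4 := by norm_num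
    rw [h4] at this
    exact mul_le_mul_of_nonneg_right this (Real.rpow_nonneg (by linarith) _)
  have b3 : |α * (α - 1)| ≤ 2 := by
    rw [abs_le]; constructor <;> nlinarith
  rw [key, abs_mul, abs_of_pos (Real.rpow_pos_of_pos hepos _)]
  have : 0 ≤ e ^ (α - 2) := (Real.rpow_pos_of_pos hepos _).le
  nlinarith

theorem hh_bound (α : ℝ) (hα0 : 0 < α) (hα2 : α < 2) (k : ℕ) :
    |aFun α ((k : ℤ) + 1)| ≤ 4 * ((k : ℝ) + 1) ^ (α - 2) := by
  unfold aFun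
  push_cast
  rcases Nat.eq_zero_or_pos k with rfl | hk
  · have h1 : (1 : ℝ) ≤ 2 ^ α := Real.one_le_rpow (by norm_num) hα0.le
    have h2 : (2 : ℝ) ^ α ≤ 2 ^ (2 : ℝ) :=
      Real.rpow_le_rpow_of_exponent_le (by norm_num) (by linarith)
    have h4 : (2 : ℝ) ^ (2 : ℝ) = 4 := by norm_num
    rw [h4] at h2
    have h5 : ((0 : ℕ) : ℝ) + 1 + 1 = 2 := by norm_num
    rw [h5]
    simp [Real.zero_rpow hα0.ne']
    rw [abs_le]; constructor <;> linarith
  · have hk' : (1 : ℝ) ≤ k := by exact_mod_cast hk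
    have := hh_second_diff α hα0 hα2 ((k : ℝ) + 1) (by linarith)
    rw [abs_of_nonneg (by linarith : (0 : ℝ) ≤ (k : ℝ) + 1 + 1),
      abs_of_nonneg (by linarith : (0 : ℝ) ≤ (k : ℝ) + 1 - 1),
      abs_of_nonneg (by linarith : (0 : ℝ) ≤ (k : ℝ) + 1), abs_div, abs_two]
    linarith

theorem hh_even (α : ℝ) (m : ℤ) : aFun α (-m) = aFun α m := by
  unfold aFun
  push_cast
  rw [show -(m : ℝ) + 1 = -((m : ℝ) - 1) by ring, show -(m : ℝ) - 1 = -((m : ℝ) + 1) by ring,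
    abs_neg, abs_neg, abs_neg]
  ring

theorem hh_sum (f : ℤ → ℝ) (hf : ∀ m, f (-m) = f m) (n : ℕ) :
    ∑ m ∈ Finset.Icc (-(n : ℤ)) n, f m = f 0 + 2 * ∑ k ∈ Finset.range n, f ((k : ℤ) + 1) := by
  induction n with
  | zero => simp
  | succ n ih =>
    have : Finset.Icc (-((n + 1 : ℕ) : ℤ)) ((n + 1 : ℕ) : ℤ) =
        insert (-((n : ℤ) + 1)) (insert ((n : ℤ) + 1) (Finset.Icc (-(n : ℤ)) n)) := by
      ext m
      simp only [Finset.mem_insert, Finset.mem_Icc]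
      push_cast
      omega
    rw [this, Finset.sum_insert, Finset.sum_insert, ih, Finset.sum_range_succ, hf]
    · ring
    · simp
    · simp only [Finset.mem_insert, Finset.mem_Icc]
      omega

theorem hh_main (α : ℝ) (hα0 : 0 < α) (hα2 : α < 2) : ∃ K : ℝ, 1 ≤ K ∧ ∀ d : ℕ, 2 ≤ d →
    ∑ m ∈ Finset.Icc (-(d : ℤ) + 1) ((d : ℤ) - 1), |aFun α m| ^ ((4 : ℝ) / 3) ≤
      1 + K * ∑ k ∈ Finset.range (d - 1), ((k : ℝ) + 1) ^ ((α - 2) * (4 / 3)) := by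
  have h4 : (1 : ℝ) ≤ 4 ^ ((4 : ℝ) / 3) := Real.one_le_rpow (by norm_num) (by norm_num)
  refine ⟨2 * 4 ^ ((4 : ℝ) / 3), by linarith, ?_⟩
  intro d hd
  obtain ⟨n, rfl⟩ : ∃ n, d = n + 1 := ⟨d - 1, by omega⟩
  have e1 : -((n + 1 : ℕ) : ℤ) + 1 = -(n : ℤ) := by push_cast; ring
  have e2 : ((n + 1 : ℕ) : ℤ) - 1 = (n : ℤ) := by push_cast; ring
  rw [e1, e2, hh_sum (fun m => |aFun α m| ^ ((4 : ℝ) / 3)) (fun m => by simp only [hh_even]) n,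
    Nat.add_sub_cancel]
  have h0 : |aFun α 0| ^ ((4 : ℝ) / 3) = 1 := by
    simp [aFun, Real.zero_rpow hα0.ne']
  have hs : ∑ k ∈ Finset.range n, |aFun α ((k : ℤ) + 1)| ^ ((4 : ℝ) / 3) ≤
      4 ^ ((4 : ℝ) / 3) * ∑ k ∈ Finset.range n, ((k : ℝ) + 1) ^ ((α - 2) * (4 / 3)) := by
    rw [Finset.mul_sum]
    refine Finset.sum_le_sum fun k _ => ?_
    have hk : (0 : ℝ) ≤ (k : ℝ) + 1 := by positivity
    rw [Real.rpow_mul hk, ← Real.mul_rpow (by norm_num) (Real.rpow_nonneg hk _)]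
    exact Real.rpow_le_rpow (abs_nonneg _) (hh_bound α hα0 hα2 k) (by norm_num)
  simp only [h0]
  linarith

theorem hh_pow_sum (q : ℝ) (hq0 : 0 < q) (hq1 : q ≤ 1) (n : ℕ) :
    q * ∑ k ∈ Finset.range n, ((k : ℝ) + 1) ^ (q - 1) ≤ (n : ℝ) ^ q := by
  induction n with
  | zero => simp [Real.zero_rpow hq0.ne']
  | succ n ih =>
    rw [Finset.sum_range_succ, mul_add]
    have hn : (0 : ℝ) < (n : ℝ) + 1 := by positivity
    have hb := rpow_one_add_le_one_add_mul_self (s := -(1 / ((n : ℝ) + 1))) (p := q)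
      (by
        have : 1 / ((n : ℝ) + 1) ≤ 1 := by
          rw [div_le_one hn]; linarith [Nat.cast_nonneg (α := ℝ) n]
        linarith) hq0.le hq1
    have e : (n : ℝ) = ((n : ℝ) + 1) * (1 + -(1 / ((n : ℝ) + 1))) := by field_simp; ring
    have e' : (1 + -(1 / ((n : ℝ) + 1))) = n / ((n : ℝ) + 1) := by field_simp; ring
    have h1 : (n : ℝ) ^ q ≤ ((n : ℝ) + 1) ^ q * (1 + q * -(1 / ((n : ℝ) + 1))) := by
      calc (n : ℝ) ^ q = ((n : ℝ) + 1) ^ q * (1 + -(1 / ((n : ℝ) + 1))) ^ q := by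
            rw [← Real.mul_rpow hn.le (by rw [e']; positivity), ← e]
        _ ≤ _ := mul_le_mul_of_nonneg_left hb (Real.rpow_nonneg hn.le _)
    have h2 : ((n : ℝ) + 1) ^ (q - 1) = ((n : ℝ) + 1) ^ q * (1 / ((n : ℝ) + 1)) := by
      rw [Real.rpow_sub_one hn.ne']; ring
    push_cast
    rw [h2]
    linarith

theorem aFun_power_sum_bound (α : ℝ) (hα0 : 0 < α) (hα2 : α < 2) :
    ∃ C : ℝ, 0 < C ∧ ∀ d : ℕ, 2 ≤ d →
      (α < 5 / 4 →
        (d : ℝ)⁻¹ * (∑ m ∈ Finset.Icc (-(d : ℤ) + 1) ((d : ℤ) - 1),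
            |aFun α m| ^ ((4 : ℝ) / 3)) ^ 3 ≤ C * (d : ℝ)⁻¹) ∧
      (α = 5 / 4 →
        (d : ℝ)⁻¹ * (∑ m ∈ Finset.Icc (-(d : ℤ) + 1) ((d : ℤ) - 1),
            |aFun α m| ^ ((4 : ℝ) / 3)) ^ 3 ≤ C * (d : ℝ)⁻¹ * Real.log d ^ 3) ∧
      (5 / 4 < α →
        (d : ℝ)⁻¹ * (∑ m ∈ Finset.Icc (-(d : ℤ) + 1) ((d : ℤ) - 1),
            |aFun α m| ^ ((4 : ℝ) / 3)) ^ 3 ≤ C * (d : ℝ) ^ (4 * α - 6)) := by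
  obtain ⟨K, hK, hmain⟩ := hh_main α hα0 hα2
  have hS0 : ∀ d : ℕ, 0 ≤ ∑ m ∈ Finset.Icc (-(d : ℤ) + 1) ((d : ℤ) - 1),
      |aFun α m| ^ ((4 : ℝ) / 3) := fun d =>
    Finset.sum_nonneg fun m _ => Real.rpow_nonneg (abs_nonneg _) _
  rcases lt_trichotomy α (5 / 4) with h | h | h
  · have hsum : Summable (fun k : ℕ => ((k : ℝ) + 1) ^ ((α - 2) * (4 / 3))) := by
      have := (Real.summable_nat_rpow (p := (α - 2) * (4 / 3))).2 (by linarith)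
      have := (summable_nat_add_iff 1).2 this
      simpa using this
    set T := ∑' k : ℕ, ((k : ℝ) + 1) ^ ((α - 2) * (4 / 3)) with hT
    have hT0 : 0 ≤ T := tsum_nonneg fun k => by positivity
    refine ⟨(1 + K * T) ^ 3, by positivity, fun d hd => ⟨fun _ => ?_, fun h' => ?_, fun h' => ?_⟩⟩
    · rw [mul_comm]
      refine mul_le_mul_of_nonneg_right (pow_le_pow_left₀ (hS0 d) ((hmain d hd).trans ?_) 3)
        (by positivity)
      have := hsum.sum_le_tsum (Finset.range (d - 1)) (fun k _ => by positivity)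
      have := mul_le_mul_of_nonneg_left this (by linarith : (0 : ℝ) ≤ K)
      linarith
    · exact absurd h' h.ne
    · exact absurd h' h.le.not_gt
  · have hl2 : 0 < Real.log 2 := Real.log_pos (by norm_num)
    refine ⟨((1 + K) / Real.log 2 + K) ^ 3, by positivity,
      fun d hd => ⟨fun h' => ?_, fun _ => ?_, fun h' => ?_⟩⟩
    · exact absurd h h'.ne
    · rw [mul_comm, mul_right_comm, ← mul_pow]
      refine mul_le_mul_of_nonneg_right (pow_le_pow_left₀ (hS0 d) ((hmain d hd).trans ?_) 3)
        (by positivity)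
      have hd' : (2 : ℝ) ≤ d := by exact_mod_cast hd
      have hld : Real.log 2 ≤ Real.log d := Real.log_le_log (by norm_num) hd'
      have e : ∑ k ∈ Finset.range (d - 1), ((k : ℝ) + 1) ^ ((α - 2) * (4 / 3)) =
          ((harmonic (d - 1) : ℚ) : ℝ) := by
        rw [harmonic]
        push_cast
        refine Finset.sum_congr rfl fun k _ => ?_
        rw [h, show ((5 / 4 - 2) * (4 / 3) : ℝ) = -1 by norm_num, Real.rpow_neg_one]
      have hh := harmonic_le_one_add_log (d - 1)
      have hl : Real.log ((d - 1 : ℕ) : ℝ) ≤ Real.log d := by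
        refine Real.log_le_log ?_ ?_
        · exact_mod_cast (by omega : 0 < d - 1)
        · exact_mod_cast (by omega : d - 1 ≤ d)
      rw [e]
      have h1 : K * ((harmonic (d - 1) : ℚ) : ℝ) ≤ K * (1 + Real.log d) :=
        mul_le_mul_of_nonneg_left (hh.trans (by linarith)) (by linarith)
      have h2 : 1 + K ≤ (1 + K) / Real.log 2 * Real.log d := by
        rw [div_mul_eq_mul_div, le_div_iff₀ hl2]
        exact mul_le_mul_of_nonneg_left hld (by linarith)
      linarith
    · exact absurd h h'.ne'
  · set q := (α - 2) * (4 / 3) + 1 with hq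
    have hq0 : 0 < q := by rw [hq]; linarith
    have hq1 : q ≤ 1 := by rw [hq]; linarith
    refine ⟨(1 + K / q) ^ 3, by positivity,
      fun d hd => ⟨fun h' => ?_, fun h' => ?_, fun _ => ?_⟩⟩
    · exact absurd h' h.le.not_gt
    · exact absurd h' h.ne'
    · have hd' : (2 : ℝ) ≤ d := by exact_mod_cast hd
      have hd0 : (0 : ℝ) < d := by linarith
      have e : (d : ℝ) ^ (4 * α - 6) = ((d : ℝ) ^ q) ^ 3 * (d : ℝ)⁻¹ := by
        rw [← Real.rpow_natCast, ← Real.rpow_mul hd0.le, ← Real.rpow_neg_one,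
          ← Real.rpow_add hd0]
        congr 1
        rw [hq]; push_cast; ring
      rw [e, mul_comm, ← mul_assoc, ← mul_pow]
      refine mul_le_mul_of_nonneg_right (pow_le_pow_left₀ (hS0 d) ((hmain d hd).trans ?_) 3)
        (by positivity)
      have hp := hh_pow_sum q hq0 hq1 (d - 1)
      have hm : ((d - 1 : ℕ) : ℝ) ^ q ≤ (d : ℝ) ^ q :=
        Real.rpow_le_rpow (by positivity) (by exact_mod_cast (by omega : d - 1 ≤ d)) hq0.le
      rw [show q - 1 = (α - 2) * (4 / 3) by rw [hq]; ring] at hp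
      have h1 : (1 : ℝ) ≤ (d : ℝ) ^ q := Real.one_le_rpow (by linarith) hq0.le
      have h2 : ∑ k ∈ Finset.range (d - 1), ((k : ℝ) + 1) ^ ((α - 2) * (4 / 3)) ≤
          (d : ℝ) ^ q / q := by
        rw [le_div_iff₀ hq0]; linarith
      have h3 := mul_le_mul_of_nonneg_left h2 (by linarith : (0 : ℝ) ≤ K)
      have h4 : (1 + K / q) * (d : ℝ) ^ q = (d : ℝ) ^ q + K * ((d : ℝ) ^ q / q) := by ring
      linarith
end
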